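/- Let G be a finite group of order n, let D be a finite-dimensional complex representation of G with character χ_D, and let V₁,…,V_r be pairwise non-isomorphic finite-dimensional irreducible complex representations of G, with characters χ₁,…,χ_r and dimensions d₁,…,d_r, such that every finite-dimensional irreducible complex representation of G is isomorphic to some V_i. Let k_i = (1/n)·Σ_{g∈G} χ_D(g)·χ_i(g⁻¹) be the multiplicity of V_i in D, and assume k_i ≠ 0 for every i. Then M^{χ_D} is invertible and its inverse has entries ((M^{χ_D})⁻¹)_{g,h} = (1/n²)·Σ_{i=1}^r (d_i²/k_i)·χ_i(g⁻¹h). -/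

import Mathlib

open FDRep CategoryTheory

/-- For a representation with character `χ`, the matrix `M^χ` indexed by the group elements,
with entries `(M^χ)_{g,h} = χ(g⁻¹ h)`. -/
noncomputable def charMatrix {G : Type} [Group G] [Fintype G] (V : FDRep ℂ G) : Matrix G G ℂ :=
  Matrix.of fun g h => V.character (g⁻¹ * h)

/-- Schur: a class function sum acts as a scalar on a simple representation. -/
lemma schur_classFun {G : Type} [Group G] [Fintype G] (W : FDRep ℂ G) (hW : Simple W)
    (φ : G → ℂ) (hφ : ∀ x y, φ (x * y) = φ (y * x)) :
    ∃ c : ℂ, (∑ x : G, φ x • W.ρ x⁻¹) = c • (LinearMap.id : W →ₗ[ℂ] W) ∧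
      c * (Module.finrank ℂ W : ℂ) = ∑ x : G, φ x * W.character x⁻¹ := by
  have hcomm : ∀ g : G, (∑ x : G, φ x • W.ρ x⁻¹) ∘ₗ W.ρ g = W.ρ g ∘ₗ (∑ x : G, φ x • W.ρ x⁻¹) := by
    intro g
    change (∑ x : G, φ x • W.ρ x⁻¹) * W.ρ g = W.ρ g * (∑ x : G, φ x • W.ρ x⁻¹)
    rw [Finset.sum_mul, Finset.mul_sum]
    refine Fintype.sum_equiv (MulAut.conj g⁻¹).toEquiv _ _ fun x => ?_
    have h1 : φ (g⁻¹ * x * g) = φ x := by rw [mul_assoc, hφ]; simp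
    rw [mul_assoc] at h1
    simp [h1, ← map_mul, mul_assoc]
  let f : W ⟶ W := ⟨InducedCategory.homMk (ModuleCat.ofHom (∑ x : G, φ x • W.ρ x⁻¹)), fun g => by
    ext1
    exact hcomm g⟩
  obtain ⟨c, hc⟩ := endomorphism_simple_eq_smul_id ℂ f
  have hc' : (∑ x : G, φ x • W.ρ x⁻¹) = c • (LinearMap.id : W →ₗ[ℂ] W) :=
    (congrArg (fun t : W ⟶ W => t.hom.hom.hom) hc).symm
  refine ⟨c, hc', ?_⟩
  have := congrArg (LinearMap.trace ℂ W) hc'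
  simp only [map_sum, map_smul, LinearMap.trace_id, smul_eq_mul] at this
  exact this.symm

/-- Irreducible representations give simple objects. -/
lemma simple_of_irred {G : Type} [Group G] [Fintype G] {U : Type} [AddCommGroup U] [Module ℂ U]
    [Module.Finite ℂ U] (ρ : Representation ℂ G U) (h : ρ.IsIrreducible) :
    Simple (FDRep.of ρ) := by
  rw [FDRep.simple_iff_char_is_norm_one]
  have hn : (Nat.card G : ℂ) ≠ 0 := by simp
  letI := invertibleOfNonzero hn
  have := Representation.char_orthonormal ρ ρ
  rw [if_pos ⟨Representation.Equiv.refl ρ⟩, inv_mul_eq_one₀ hn] at this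
  exact this.symm

/-- A class function orthogonal to every simple character vanishes. -/
lemma classFun_eq_zero {G : Type} [Group G] [Fintype G]
    (φ : G → ℂ) (hφ : ∀ x y, φ (x * y) = φ (y * x))
    (h0 : ∀ W : FDRep ℂ G, Simple W → ∑ x : G, φ x * W.character x⁻¹ = 0) (u : G) : φ u = 0 := by
  classical
  let e : MonoidAlgebra ℂ G := ∑ x : G, MonoidAlgebra.single x⁻¹ (φ x)
  have key : e ∈ Ring.jacobson (MonoidAlgebra ℂ G) := by
    refine Submodule.mem_sInf.mpr fun m hm => ?_
    have hs : IsSimpleModule (MonoidAlgebra ℂ G) (MonoidAlgebra ℂ G ⧸ m) :=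
      isSimpleModule_iff_isCoatom.mpr hm
    set ρ := Representation.ofModule' (k := ℂ) (G := G) (MonoidAlgebra ℂ G ⧸ m) with hρ
    have hfin : Module.Finite ℂ (MonoidAlgebra ℂ G ⧸ m) :=
      Module.Finite.trans (MonoidAlgebra ℂ G) _
    have hact' : ∀ (a : MonoidAlgebra ℂ G) (v : MonoidAlgebra ℂ G ⧸ m),
        ρ.asAlgebraHom a v = a • v := by
      intro a v
      simp [hρ, Representation.asAlgebraHom, Representation.ofModule']
    have hirr : ρ.IsIrreducible := by
      rw [Representation.irreducible_iff_isSimpleModule_asModule]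
      let E : ρ.asModule ≃ₗ[MonoidAlgebra ℂ G] (MonoidAlgebra ℂ G ⧸ m) :=
        { ρ.asModuleEquiv.toAddEquiv with
          map_smul' := fun a v => (ρ.asModuleEquiv_map_smul a v).trans (hact' _ _) }
      exact IsSimpleModule.congr E
    have hsim := simple_of_irred ρ hirr
    obtain ⟨c, hc1, hc2⟩ := schur_classFun (FDRep.of ρ) hsim φ hφ
    rw [h0 _ hsim] at hc2
    have hz : (∑ x : G, φ x • ρ x⁻¹) = 0 := by
      rcases mul_eq_zero.mp hc2 with h | h
      · rw [h, zero_smul] at hc1; exact hc1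
      · have : Subsingleton (MonoidAlgebra ℂ G ⧸ m) :=
          Module.finrank_zero_iff.mp (Nat.cast_eq_zero.mp h)
        exact Subsingleton.elim _ _
    have hact : ρ.asAlgebraHom e = 0 := by
      rw [← hz]; simp [e, map_sum, Representation.asAlgebraHom_single]
    have h2 := hact' e (Submodule.Quotient.mk 1)
    rw [hact, LinearMap.zero_apply] at h2
    have h2 := h2.symm
    rw [← Submodule.Quotient.mk_smul, Submodule.Quotient.mk_eq_zero] at h2
    simpa using h2
  rw [IsSemisimpleRing.jacobson_eq_bot, Submodule.mem_bot] at key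
  have := congrArg (fun t : MonoidAlgebra ℂ G => t.coeff u⁻¹) key
  simpa [e, MonoidAlgebra.coeff_sum, Finsupp.single_apply, Finsupp.finset_sum_apply] using this

lemma finrank_ne_zero_of_simple {G : Type} [Group G] [Fintype G] (W : FDRep ℂ G) (hW : Simple W) :
    (Module.finrank ℂ W : ℂ) ≠ 0 := by
  intro h
  have hs : Subsingleton W := Module.finrank_zero_iff.mp (Nat.cast_eq_zero.mp h)
  have h1 := (FDRep.simple_iff_char_is_norm_one W).mp hW
  have h2 : ∀ g, W.character g = 0 := fun g => by
    have : W.ρ g = 0 := LinearMap.ext fun x => Subsingleton.elim _ _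
    simp [FDRep.character, this]
  simp [h2] at h1
  exact (Nat.cast_ne_zero.mpr Fintype.card_ne_zero) h1.symm

theorem inv_charMatrix {G : Type} [Group G] [Fintype G] [DecidableEq G]
    (D : FDRep ℂ G)
    (r : ℕ) (V : Fin r → FDRep ℂ G)
    (hsimple : ∀ i, Simple (V i))
    (hpairwise : ∀ i j, i ≠ j → ¬ Nonempty (V i ≅ V j))
    (hcomplete : ∀ W : FDRep ℂ G, Simple W → ∃ i, Nonempty (W ≅ V i))
    (k : Fin r → ℂ)
    (hk : ∀ i, k i = (Fintype.card G : ℂ)⁻¹ * ∑ g : G, D.character g * (V i).character (g⁻¹))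
    (hknz : ∀ i, k i ≠ 0) :
    IsUnit (charMatrix D).det ∧
      ∀ g h : G, (charMatrix D)⁻¹ g h
        = ((Fintype.card G : ℂ) ^ 2)⁻¹
            * ∑ i : Fin r, ((Module.finrank ℂ (V i) : ℂ) ^ 2 / k i) * (V i).character (g⁻¹ * h) := by
  classical
  have hn : (Fintype.card G : ℂ) ≠ 0 := by simp
  have hd := fun i => finrank_ne_zero_of_simple (V i) (hsimple i)
  letI := invertibleOfNonzero (show (Nat.card G : ℂ) ≠ 0 by simp)
  -- convolution
  have hconv : ∀ i (u : G), ∑ x : G, D.character x * (V i).character (x⁻¹ * u) =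
      Fintype.card G * k i / Module.finrank ℂ (V i) * (V i).character u := by
    intro i u
    obtain ⟨c, h1, h2⟩ := schur_classFun (V i) (hsimple i) D.character
      (fun x y => D.char_mul_comm y x)
    have h3 : c = Fintype.card G * k i / Module.finrank ℂ (V i) := by
      rw [eq_div_iff (hd i), h2, hk i, mul_inv_cancel_left₀ hn]
    rw [← h3]
    have h4 := congrArg (fun t => LinearMap.trace ℂ (V i) (t * (V i).ρ u)) h1
    simp only [Finset.sum_mul, smul_mul_assoc, ← map_mul, map_sum, map_smul, smul_eq_mul] at h4
    exact h4
  -- column orthogonality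
  have hcol : ∀ u : G, ∑ i, (Module.finrank ℂ (V i) : ℂ) * (V i).character u =
      if u = 1 then (Fintype.card G : ℂ) else 0 := by
    intro u
    rw [← sub_eq_zero]
    refine classFun_eq_zero (fun u => ∑ i, (Module.finrank ℂ (V i) : ℂ) * (V i).character u -
      if u = 1 then (Fintype.card G : ℂ) else 0) ?_ ?_ u
    · intro x y
      have : x * y = 1 ↔ y * x = 1 := mul_eq_one_comm
      simp only [this, FDRep.char_mul_comm _ y x]
    · intro W hW
      obtain ⟨j, ⟨e⟩⟩ := hcomplete W hW
      rw [FDRep.char_iso e]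
      have horth : ∀ i, ∑ x : G, (V i).character x * (V j).character x⁻¹ =
          if i = j then (Fintype.card G : ℂ) else 0 := by
        intro i
        haveI := hsimple i
        haveI := hsimple j
        have h := FDRep.char_orthonormal (V i) (V j)
        rw [Nat.card_eq_fintype_card, inv_mul_eq_iff_eq_mul₀ hn] at h
        rw [h]
        by_cases hij : i = j
        · subst hij
          rw [if_pos ⟨Iso.refl _⟩]; simp
        · rw [if_neg (hpairwise i j hij)]; simp [hij]
      simp only [sub_mul, Finset.sum_sub_distrib, Finset.sum_mul]
      rw [Finset.sum_comm]
      simp only [mul_assoc, ← Finset.mul_sum, horth]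
      simp [mul_comm]
  let N : Matrix G G ℂ := Matrix.of fun g h => ((Fintype.card G : ℂ) ^ 2)⁻¹
            * ∑ i : Fin r, ((Module.finrank ℂ (V i) : ℂ) ^ 2 / k i) * (V i).character (g⁻¹ * h)
  have hMN : charMatrix D * N = 1 := by
    ext g h
    rw [Matrix.mul_apply]
    have h1 : ∀ x, charMatrix D g x * N x h = ∑ i, ((Fintype.card G : ℂ) ^ 2)⁻¹ *
        ((Module.finrank ℂ (V i) : ℂ) ^ 2 / k i) *
        (D.character (g⁻¹ * x) * (V i).character (x⁻¹ * h)) := by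
      intro x
      simp only [charMatrix, N, Matrix.of_apply, Finset.mul_sum]
      exact Finset.sum_congr rfl fun i _ => by ring
    simp only [h1]
    rw [Finset.sum_comm]
    have h2 : ∀ i, ∑ x, D.character (g⁻¹ * x) * (V i).character (x⁻¹ * h) =
        Fintype.card G * k i / Module.finrank ℂ (V i) * (V i).character (g⁻¹ * h) := by
      intro i
      rw [← hconv]
      refine Fintype.sum_equiv (Equiv.mulLeft g⁻¹) _ _ fun x => ?_
      simp [mul_assoc]
    have h3 : ∀ i, ((Fintype.card G : ℂ) ^ 2)⁻¹ * ((Module.finrank ℂ (V i) : ℂ) ^ 2 / k i) *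
        (Fintype.card G * k i / Module.finrank ℂ (V i) * (V i).character (g⁻¹ * h)) =
        (Fintype.card G : ℂ)⁻¹ * ((Module.finrank ℂ (V i) : ℂ) * (V i).character (g⁻¹ * h)) := by
      intro i
      have := hd i
      have := hknz i
      field_simp
    simp only [← Finset.mul_sum, h2, h3, hcol, Matrix.one_apply, inv_mul_eq_one]
    split_ifs <;> simp [hn]
  refine ⟨(Matrix.isUnit_iff_isUnit_det _).mp (IsUnit.of_mul_eq_one _ hMN), fun g h => ?_⟩
  rw [Matrix.inv_eq_right_inv hMN]
  rfl
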